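/- arXiv:1512.06960 — 5 statements merged into one kernel-verified Lean document; each statement's English description precedes it below -/
import Mathlib

section
/- Assume that for every t ∈ ℕ and every history y^t ∈ Y^{t+1} the infimum defining the sequential value 𝕌_t(y^t) is attained by some distortion sequence. Then for every t and y^t the Bellman equation holds: 𝕌_t(y^t) = c_t(y^t) + γ · inf_{m ∈ 𝓜(y_t)} [ Σ_{y'∈Y} P(y_t, y') m(y') 𝕌_{t+1}(y^t, y') + θ · ℰ[m](y_t) ], and the infimum on the right-hand side is attained. -/
open Finset

/-! Setup for the minimizing agent's sequential problem (robust multiplier preferences)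
over a finite Markov chain `Y` with transition kernel `P`.

A history of length `t+1` is `h : Fin (t+1) → Y`; a continuation of length `j` is
`z : Fin j → Y`.  A distortion sequence from a node with last state `y0` assigns to every
continuation `z` a conditional likelihood ratio `d j z : Y → ℝ` in `𝓜(lastState y0 z)`. -/

/-- Last state of the chain after continuation `z` of length `j` from a node ending at `y0`. -/
def lastState {Y : Type} (y0 : Y) {j : ℕ} (z : Fin j → Y) : Y :=
  (Fin.cons y0 z : Fin (j + 1) → Y) (Fin.last j)

/-- Probability weight `∏_{k=1}^{j} P(s_{k-1}, s_k)` of continuation `z` from `y0` under `P`. -/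
def pathWeight {Y : Type} (P : Y → Y → ℝ) (y0 : Y) {j : ℕ} (z : Fin j → Y) : ℝ :=
  ∏ k : Fin j, P ((Fin.cons y0 z : Fin (j + 1) → Y) k.castSucc) (z k)

/-- Conditional relative entropy `ℰ[m](y) = Σ_{y'} P(y,y') m(y') log m(y')`
(with the convention `0·log 0 = 0`, as `Real.log 0 = 0`). -/
noncomputable def condEnt {Y : Type} [Fintype Y] (P : Y → Y → ℝ) (m : Y → ℝ) (y : Y) : ℝ :=
  ∑ y', P y y' * (m y' * Real.log (m y'))

/-- A distortion sequence: at every continuation `z`, `d j z` is nonnegative with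
conditional mean one under `P(lastState y0 z, ·)`. -/
def Admissible {Y : Type} [Fintype Y] (P : Y → Y → ℝ) (y0 : Y)
    (d : (j : ℕ) → (Fin j → Y) → Y → ℝ) : Prop :=
  ∀ (j : ℕ) (z : Fin j → Y),
    (∀ y', 0 ≤ d j z y') ∧ (∑ y', P (lastState y0 z) y' * d j z y' = 1)

/-- Cumulative likelihood ratio `M_{t,j}` of distortion sequence `d` along continuation `z`. -/
def like {Y : Type} (d : (j : ℕ) → (Fin j → Y) → Y → ℝ) {j : ℕ} (z : Fin j → Y) : ℝ :=
  ∏ k : Fin j, d k.val (fun i => z (Fin.castLE k.isLt.le i)) (z k)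

/-- Concatenation of a history of length `t+1` with a continuation of length `j`. -/
def extHist {Y : Type} {t j : ℕ} (h : Fin (t + 1) → Y) (z : Fin j → Y) :
    Fin (t + j + 1) → Y :=
  fun i => Fin.append h z (Fin.cast (by omega) i)

/-- The `j`-th term `γ^j · E[ M_{t,j} · ( c_{t+j} + θγ·ℰ[m_{t+j+1}] ) | y^t ]` of the
minimizing agent's objective. -/
noncomputable def objTerm {Y : Type} [Fintype Y] (P : Y → Y → ℝ) (γ θ : ℝ)
    (c : (n : ℕ) → (Fin (n + 1) → Y) → ℝ) (t : ℕ) (h : Fin (t + 1) → Y)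
    (d : (j : ℕ) → (Fin j → Y) → Y → ℝ) (j : ℕ) : ℝ :=
  γ ^ j * ∑ z : Fin j → Y,
    pathWeight P (h (Fin.last t)) z * like d z *
      (c (t + j) (extHist h z) + θ * γ * condEnt P (d j z) (lastState (h (Fin.last t)) z))

/-- The sequential value `𝕌_t(y^t)`: the infimum of the objective over admissible
distortion sequences (with a well-defined, i.e. summable, objective). -/
noncomputable def seqVal {Y : Type} [Fintype Y] (P : Y → Y → ℝ) (γ θ : ℝ)
    (c : (n : ℕ) → (Fin (n + 1) → Y) → ℝ) (t : ℕ) (h : Fin (t + 1) → Y) : ℝ :=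
  sInf {v : ℝ | ∃ d, Admissible P (h (Fin.last t)) d ∧
    Summable (objTerm P γ θ c t h d) ∧ v = ∑' j, objTerm P γ θ c t h d j}

/-! Splitting a distortion sequence into its first ratio `m` and the sequences that follow each
first transition writes its objective as `c + γ (E[m V] + θ ℰ[m])`, where `V` collects the
objectives of the tails. Tails that nearly attain their infimum give `≤` in the Bellman equation,
and bounding each tail below by its infimum gives `≥`. The infimum over `m` is explicit: by Gibbs'
inequality `E[m V] + θ ℰ[m]` is minimized by `m ∝ exp (-V / θ)`, with minimum
`-θ log E[exp (-V / θ)]`. -/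

theorem sub_le_mul_log_sub_log {a b : ℝ} (ha : 0 ≤ a) (hb : 0 < b) :
    a - b ≤ a * (Real.log a - Real.log b) := by
  rcases ha.eq_or_lt with rfl | ha
  · simpa using hb.le
  · calc a - b = b * (a / b - 1) := by field_simp
      _ ≤ b * (a / b * Real.log (a / b)) := by
        gcongr
        exact Real.self_sub_one_le_mul_log (by positivity)
      _ = a * (Real.log a - Real.log b) := by
        rw [Real.log_div ha.ne' hb.ne']
        field_simp

theorem gibbs_inequality {ι : Type*} {s : Finset ι} {p m n : ι → ℝ} (hp : ∀ i ∈ s, 0 ≤ p i)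
    (hm : ∀ i ∈ s, 0 ≤ m i) (hn : ∀ i ∈ s, 0 < n i)
    (hmn : ∑ i ∈ s, p i * n i ≤ ∑ i ∈ s, p i * m i) :
    0 ≤ ∑ i ∈ s, p i * (m i * (Real.log (m i) - Real.log (n i))) :=
  calc 0 ≤ ∑ i ∈ s, p i * (m i - n i) := by
        simpa only [mul_sub, sum_sub_distrib, sub_nonneg] using hmn
    _ ≤ _ := sum_le_sum fun i hi =>
        mul_le_mul_of_nonneg_left (sub_le_mul_log_sub_log (hm i hi) (hn i hi)) (hp i hi)

theorem summable_of_summable_sum_mul {ι κ : Type*} {s : Finset ι} {w : ι → ℝ} {f : ι → κ → ℝ}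
    {g : κ → ℝ} (hw : ∀ i ∈ s, 0 ≤ w i) (hg : Summable g) (hgf : ∀ i ∈ s, ∀ k, g k ≤ f i k)
    (hs : Summable fun k => ∑ i ∈ s, w i * f i k) {i : ι} (hi : i ∈ s) (hwi : w i ≠ 0) :
    Summable (f i) := by
  have hnonneg : ∀ l ∈ s, ∀ k, 0 ≤ w l * (f l k - g k) := fun l hl k =>
    mul_nonneg (hw l hl) (sub_nonneg.2 (hgf l hl k))
  have hsum : Summable fun k => ∑ l ∈ s, w l * (f l k - g k) :=
    (hs.sub (hg.mul_left (∑ l ∈ s, w l))).congr fun k => by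
      simp only [mul_sub, sum_sub_distrib, sum_mul]
  have hterm : Summable fun k => w i * (f i k - g k) :=
    hsum.of_nonneg_of_le (hnonneg i hi) fun k =>
      single_le_sum (f := fun l => w l * (f l k - g k)) (fun l hl => hnonneg l hl k) hi
  exact (((summable_mul_left_iff hwi).1 hterm).add hg).congr fun k => sub_add_cancel _ _

/-- The set `𝓜(y)` of conditional likelihood ratios with respect to `P(y, ·)`. -/
def likelihoodRatios {Y : Type} [Fintype Y] (P : Y → Y → ℝ) (y : Y) : Set (Y → ℝ) :=
  {m | (∀ y', 0 ≤ m y') ∧ ∑ y', P y y' * m y' = 1}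

/-- The quantity `E[m V] + θ ℰ[m]` under `P(y, ·)` that the minimizing agent faces when the
continuation values are `V`. -/
noncomputable def penalizedMean {Y : Type} [Fintype Y] (P : Y → Y → ℝ) (θ : ℝ) (V m : Y → ℝ)
    (y : Y) : ℝ :=
  (∑ y', P y y' * m y' * V y') + θ * condEnt P m y

/-- The partition function `E[exp (-V / θ)]` under `P(y, ·)`. -/
noncomputable def partitionFun {Y : Type} [Fintype Y] (P : Y → Y → ℝ) (θ : ℝ) (V : Y → ℝ)
    (y : Y) : ℝ :=
  ∑ y', P y y' * Real.exp (-V y' / θ)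

/-- The entropic certainty equivalent `-θ log E[exp (-V / θ)]` of `V` under `P(y, ·)`, which is
the minimum of `penalizedMean` over `likelihoodRatios`. -/
noncomputable def entropicCertaintyEquiv {Y : Type} [Fintype Y] (P : Y → Y → ℝ) (θ : ℝ)
    (V : Y → ℝ) (y : Y) : ℝ :=
  -θ * Real.log (partitionFun P θ V y)

/-- The exponentially tilted likelihood ratio `exp (-V / θ) / E[exp (-V / θ)]`, which minimizes
`penalizedMean` over `likelihoodRatios`. -/
noncomputable def gibbsRatio {Y : Type} [Fintype Y] (P : Y → Y → ℝ) (θ : ℝ) (V : Y → ℝ) (y : Y) :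
    Y → ℝ :=
  fun y' => Real.exp (-V y' / θ) / partitionFun P θ V y

section OneStep

variable {Y : Type} [Fintype Y] {P : Y → Y → ℝ} {θ : ℝ} {V W m : Y → ℝ} {y : Y}

theorem condEnt_nonneg (hP0 : ∀ y', 0 ≤ P y y') (hP1 : ∑ y', P y y' = 1)
    (hm : m ∈ likelihoodRatios P y) : 0 ≤ condEnt P m y := by
  have hgibbs := gibbs_inequality (s := univ) (p := P y) (m := m) (n := fun _ => 1)
    (fun y' _ => hP0 y') (fun y' _ => hm.1 y') (fun _ _ => one_pos) (by simp [hP1, hm.2])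
  simpa only [condEnt, Real.log_one, sub_zero] using hgibbs

theorem penalizedMean_mono (hP0 : ∀ y', 0 ≤ P y y') (hm : ∀ y', 0 ≤ m y')
    (hVW : ∀ y', P y y' * m y' ≠ 0 → V y' ≤ W y') :
    penalizedMean P θ V m y ≤ penalizedMean P θ W m y := by
  refine add_le_add_left (sum_le_sum fun y' _ => ?_) _
  by_cases hy' : P y y' * m y' = 0
  · simp only [hy', zero_mul, le_refl]
  · exact mul_le_mul_of_nonneg_left (hVW y' hy') (mul_nonneg (hP0 y') (hm y'))

theorem penalizedMean_add_const (hm : m ∈ likelihoodRatios P y) (a : ℝ) :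
    penalizedMean P θ (fun y' => V y' + a) m y = penalizedMean P θ V m y + a := by
  simp only [penalizedMean, mul_add, sum_add_distrib, ← sum_mul, hm.2, one_mul]
  ring

theorem partitionFun_pos (hP0 : ∀ y', 0 ≤ P y y') (hP1 : ∑ y', P y y' = 1) :
    0 < partitionFun P θ V y := by
  obtain ⟨y', -, hy'⟩ := exists_ne_zero_of_sum_ne_zero (hP1.trans_ne one_ne_zero)
  exact sum_pos' (fun y' _ => mul_nonneg (hP0 y') (Real.exp_pos _).le)
    ⟨y', mem_univ y', mul_pos ((hP0 y').lt_of_ne' hy') (Real.exp_pos _)⟩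

theorem gibbsRatio_pos (hP0 : ∀ y', 0 ≤ P y y') (hP1 : ∑ y', P y y' = 1) (y' : Y) :
    0 < gibbsRatio P θ V y y' :=
  div_pos (Real.exp_pos _) (partitionFun_pos hP0 hP1)

theorem gibbsRatio_mem_likelihoodRatios (hP0 : ∀ y', 0 ≤ P y y') (hP1 : ∑ y', P y y' = 1) :
    gibbsRatio P θ V y ∈ likelihoodRatios P y := by
  refine ⟨fun y' => (gibbsRatio_pos hP0 hP1 y').le, ?_⟩
  simp only [gibbsRatio, ← mul_div_assoc, ← sum_div]
  exact div_self (partitionFun_pos hP0 hP1).ne'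

theorem penalizedMean_eq_entropicCertaintyEquiv_add (hP0 : ∀ y', 0 ≤ P y y')
    (hP1 : ∑ y', P y y' = 1) (hθ : θ ≠ 0) (hm : m ∈ likelihoodRatios P y) :
    penalizedMean P θ V m y = entropicCertaintyEquiv P θ V y +
      θ * ∑ y', P y y' * (m y' * (Real.log (m y') - Real.log (gibbsRatio P θ V y y'))) := by
  have hZ : partitionFun P θ V y ≠ 0 := (partitionFun_pos hP0 hP1).ne'
  have hlog (y' : Y) : Real.log (gibbsRatio P θ V y y') =
      -V y' / θ - Real.log (partitionFun P θ V y) := by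
    rw [gibbsRatio, Real.log_div (Real.exp_ne_zero _) hZ, Real.log_exp]
  rw [entropicCertaintyEquiv, ← mul_one (-θ * _), ← hm.2, penalizedMean, condEnt]
  simp only [hlog, mul_sum, ← sum_add_distrib]
  refine sum_congr rfl fun y' _ => ?_
  field_simp
  ring

theorem isLeast_entropicCertaintyEquiv (hP0 : ∀ y', 0 ≤ P y y') (hP1 : ∑ y', P y y' = 1)
    (hθ : 0 < θ) (V : Y → ℝ) :
    IsLeast {w | ∃ m ∈ likelihoodRatios P y, w = penalizedMean P θ V m y}
      (entropicCertaintyEquiv P θ V y) := by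
  have hgibbs : gibbsRatio P θ V y ∈ likelihoodRatios P y :=
    gibbsRatio_mem_likelihoodRatios hP0 hP1
  constructor
  · refine ⟨_, hgibbs, ?_⟩
    simp [penalizedMean_eq_entropicCertaintyEquiv_add hP0 hP1 hθ.ne' hgibbs]
  · rintro _ ⟨m, hm, rfl⟩
    rw [penalizedMean_eq_entropicCertaintyEquiv_add hP0 hP1 hθ.ne' hm]
    exact le_add_of_nonneg_right <| mul_nonneg hθ.le <| gibbs_inequality (fun y' _ => hP0 y')
      (fun y' _ => hm.1 y') (fun y' _ => gibbsRatio_pos hP0 hP1 y') (hgibbs.2.trans hm.2.symm).le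

end OneStep

/-- A family of one-step ratios indexed by continuations; it is a distortion sequence in the sense
of the problem when it satisfies `Admissible`. -/
abbrev Distortion (Y : Type) : Type := (j : ℕ) → (Fin j → Y) → Y → ℝ

namespace Distortion

variable {Y : Type}

/-- The ratio that a distortion sequence applies to the first transition. -/
def head (d : Distortion Y) : Y → ℝ := d 0 Fin.elim0

/-- The part of a distortion sequence that follows a first transition to `y`. -/
def tail (d : Distortion Y) (y : Y) : Distortion Y := fun j z => d (j + 1) (Fin.cons y z)

/-- The distortion sequence that starts with `m` and follows `D y` after a first transition
to `y`. -/
def cons (m : Y → ℝ) (D : Y → Distortion Y) : Distortion Y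
  | 0, _ => m
  | j + 1, z => D (z 0) j (Fin.tail z)

/-- The distortion sequence that leaves the reference probabilities unchanged. -/
def undistorted (Y : Type) : Distortion Y := fun _ _ _ => 1

theorem head_cons (m : Y → ℝ) (D : Y → Distortion Y) : (cons m D).head = m := rfl

theorem tail_cons (m : Y → ℝ) (D : Y → Distortion Y) (y : Y) : (cons m D).tail y = D y := by
  funext j z
  simp only [tail, cons, Fin.cons_zero, Fin.tail_cons]

end Distortion

namespace Admissible

variable {Y : Type} [Fintype Y] {P : Y → Y → ℝ} {x : Y} {d : Distortion Y}

theorem head_mem_likelihoodRatios (hd : Admissible P x d) : d.head ∈ likelihoodRatios P x :=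
  hd 0 Fin.elim0

theorem tail (hd : Admissible P x d) (y : Y) : Admissible P y (d.tail y) :=
  fun j z => hd (j + 1) (Fin.cons y z)

theorem cons {m : Y → ℝ} {D : Y → Distortion Y} (hm : m ∈ likelihoodRatios P x)
    (hD : ∀ y, Admissible P y (D y)) : Admissible P x (Distortion.cons m D) := by
  rintro (_ | j) z
  · exact hm
  · cases z using Fin.consCases with
    | cons y z => exact hD y j z

theorem undistorted (hP1 : ∀ y, ∑ y', P y y' = 1) :
    Admissible P x (Distortion.undistorted Y) :=
  fun _ _ => ⟨fun _ => zero_le_one, by simp only [Distortion.undistorted, mul_one, hP1]⟩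

end Admissible

section Paths

variable {Y : Type}

theorem lastState_cons (x y : Y) {j : ℕ} (z : Fin j → Y) :
    lastState x (Fin.cons y z : Fin (j + 1) → Y) = lastState y z := rfl

theorem pathWeight_cons (P : Y → Y → ℝ) (x y : Y) {j : ℕ} (z : Fin j → Y) :
    pathWeight P x (Fin.cons y z : Fin (j + 1) → Y) = P x y * pathWeight P y z := by
  rw [pathWeight, Fin.prod_univ_succ]
  rfl

theorem like_cons (d : Distortion Y) (y : Y) {j : ℕ} (z : Fin j → Y) :
    like d (Fin.cons y z : Fin (j + 1) → Y) = d.head y * like (d.tail y) z := by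
  rw [like, Fin.prod_univ_succ]
  congr 1
  · exact congrFun (congrArg (d 0) (Subsingleton.elim _ _)) y
  · refine prod_congr rfl fun k _ => ?_
    refine congrFun (congrArg (d (k.val + 1)) (funext fun i => ?_)) _
    cases i using Fin.cases <;> rfl

/-- Stated for values of `c`, as the two histories live over the distinct lengths `t + (j + 1)`
and `t + 1 + j`. -/
theorem apply_extHist_cons (c : (n : ℕ) → (Fin (n + 1) → Y) → ℝ) {t j : ℕ}
    (h : Fin (t + 1) → Y) (y : Y) (z : Fin j → Y) :
    c (t + (j + 1)) (extHist h (Fin.cons y z : Fin (j + 1) → Y)) =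
      c (t + 1 + j) (extHist (Fin.snoc h y : Fin (t + 1 + 1) → Y) z) := by
  have apply_cast {n n' : ℕ} (e : n = n') (f : Fin (n + 1) → Y) (f' : Fin (n' + 1) → Y)
      (hf : ∀ i, f i = f' (Fin.cast (by omega) i)) : c n f = c n' f' := by
    subst e
    exact congrArg (c n) (funext hf)
  refine apply_cast (by omega) _ _ fun i => ?_
  simp only [extHist, Fin.append_right_cons]
  rfl

theorem sum_fin_succ_fun [Fintype Y] {M : Type*} [AddCommMonoid M] {j : ℕ}
    (F : (Fin (j + 1) → Y) → M) : ∑ z, F z = ∑ y, ∑ z : Fin j → Y, F (Fin.cons y z) := by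
  rw [← (Fin.consEquiv fun _ : Fin (j + 1) => Y).sum_comp, Fintype.sum_prod_type]
  rfl

variable [Fintype Y] {P : Y → Y → ℝ}

theorem sum_pathWeight_mul_like_eq_one {x : Y} {d : Distortion Y} (hd : Admissible P x d) (j : ℕ) :
    ∑ z : Fin j → Y, pathWeight P x z * like d z = 1 := by
  induction j generalizing x d with
  | zero => simp [pathWeight, like]
  | succ j ih =>
    calc ∑ z : Fin (j + 1) → Y, pathWeight P x z * like d z
        = ∑ y, P x y * d.head y * ∑ z : Fin j → Y, pathWeight P y z * like (d.tail y) z := by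
          simp only [sum_fin_succ_fun, pathWeight_cons, like_cons, mul_sum]
          exact sum_congr rfl fun y _ => sum_congr rfl fun z _ => by ring
      _ = 1 := by simpa only [ih (hd.tail _), mul_one] using hd.head_mem_likelihoodRatios.2

theorem pathWeight_mul_like_nonneg (hP0 : ∀ y y', 0 ≤ P y y') {x : Y} {d : Distortion Y}
    (hd : Admissible P x d) {j : ℕ} (z : Fin j → Y) : 0 ≤ pathWeight P x z * like d z :=
  mul_nonneg (prod_nonneg fun _ _ => hP0 _ _) (prod_nonneg fun _ _ => (hd _ _).1 _)

theorem condEnt_undistorted (y : Y) {j : ℕ} (z : Fin j → Y) :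
    condEnt P (Distortion.undistorted Y j z) y = 0 := by
  simp only [condEnt, Distortion.undistorted, Real.log_one, mul_zero, sum_const_zero]

end Paths

section Objective

variable {Y : Type} [Fintype Y] (P : Y → Y → ℝ) (γ θ : ℝ)
  (c : (n : ℕ) → (Fin (n + 1) → Y) → ℝ) (t : ℕ) (h : Fin (t + 1) → Y) (d : Distortion Y)

theorem objTerm_zero :
    objTerm P γ θ c t h d 0 = c t h + θ * γ * condEnt P d.head (h (Fin.last t)) := by
  have hext : extHist h (default : Fin 0 → Y) = h := funext fun i => Fin.append_left h default i
  have hdef : (default : Fin 0 → Y) = Fin.elim0 := Subsingleton.elim _ _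
  simp only [objTerm, pathWeight, like, Fintype.sum_unique, univ_eq_empty, prod_empty, pow_zero,
    one_mul]
  rw [hext, hdef]
  rfl

theorem objTerm_succ (j : ℕ) :
    objTerm P γ θ c t h d (j + 1) = γ * ∑ y, P (h (Fin.last t)) y * d.head y *
      objTerm P γ θ c (t + 1) (Fin.snoc h y) (d.tail y) j := by
  simp only [objTerm, sum_fin_succ_fun, mul_sum]
  refine sum_congr rfl fun y _ => sum_congr rfl fun z _ => ?_
  rw [pathWeight_cons, like_cons, apply_extHist_cons c, lastState_cons, Fin.snoc_last,
    Distortion.tail]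
  ring

theorem hasSum_objTerm (hs : ∀ y, P (h (Fin.last t)) y * d.head y ≠ 0 →
      Summable (objTerm P γ θ c (t + 1) (Fin.snoc h y) (d.tail y))) :
    HasSum (objTerm P γ θ c t h d) (c t h + γ * penalizedMean P θ
      (fun y => ∑' j, objTerm P γ θ c (t + 1) (Fin.snoc h y) (d.tail y) j)
      d.head (h (Fin.last t))) := by
  have hmean : HasSum (fun j => ∑ y, P (h (Fin.last t)) y * d.head y *
        objTerm P γ θ c (t + 1) (Fin.snoc h y) (d.tail y) j)
      (∑ y, P (h (Fin.last t)) y * d.head y *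
        ∑' j, objTerm P γ θ c (t + 1) (Fin.snoc h y) (d.tail y) j) := by
    refine hasSum_sum fun y _ => ?_
    by_cases hy : P (h (Fin.last t)) y * d.head y = 0
    · simpa only [hy, zero_mul] using hasSum_zero
    · exact (hs y hy).hasSum.mul_left _
  have hvalue : c t h + γ * penalizedMean P θ
        (fun y => ∑' j, objTerm P γ θ c (t + 1) (Fin.snoc h y) (d.tail y) j)
        d.head (h (Fin.last t)) =
      objTerm P γ θ c t h d 0 + γ * ∑ y, P (h (Fin.last t)) y * d.head y *
        ∑' j, objTerm P γ θ c (t + 1) (Fin.snoc h y) (d.tail y) j := by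
    rw [objTerm_zero, penalizedMean]
    ring
  rw [hvalue]
  exact HasSum.zero_add (by simpa only [objTerm_succ] using hmean.mul_left γ)

end Objective

section Bounds

variable {Y : Type} [Fintype Y] {P : Y → Y → ℝ} {γ θ C : ℝ}
  {c : (n : ℕ) → (Fin (n + 1) → Y) → ℝ} {t : ℕ} {h : Fin (t + 1) → Y} {d : Distortion Y}

theorem neg_mul_pow_le_objTerm (hP0 : ∀ y y', 0 ≤ P y y') (hP1 : ∀ y, ∑ y', P y y' = 1)
    (hγ : 0 ≤ γ) (hθ : 0 ≤ θ) (hc : ∀ n h, -C ≤ c n h) (hd : Admissible P (h (Fin.last t)) d)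
    (j : ℕ) : -(C * γ ^ j) ≤ objTerm P γ θ c t h d j :=
  calc -(C * γ ^ j)
      = γ ^ j * ∑ z : Fin j → Y, pathWeight P (h (Fin.last t)) z * like d z * -C := by
        rw [← sum_mul, sum_pathWeight_mul_like_eq_one hd]
        ring
    _ ≤ objTerm P γ θ c t h d j := by
        refine mul_le_mul_of_nonneg_left (sum_le_sum fun z _ => ?_) (pow_nonneg hγ j)
        refine mul_le_mul_of_nonneg_left ?_ (pathWeight_mul_like_nonneg hP0 hd z)
        exact le_add_of_le_of_nonneg (hc _ _)
          (mul_nonneg (mul_nonneg hθ hγ) (condEnt_nonneg (hP0 _) (hP1 _) (hd j z)))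

theorem abs_objTerm_undistorted_le (hP0 : ∀ y y', 0 ≤ P y y') (hP1 : ∀ y, ∑ y', P y y' = 1)
    (hγ : 0 ≤ γ) (hc : ∀ n h, |c n h| ≤ C) (j : ℕ) :
    |objTerm P γ θ c t h (Distortion.undistorted Y) j| ≤ C * γ ^ j := by
  have hd : Admissible P (h (Fin.last t)) (Distortion.undistorted Y) := .undistorted hP1
  set w : (Fin j → Y) → ℝ := fun z =>
    pathWeight P (h (Fin.last t)) z * like (Distortion.undistorted Y) z
  have hw (z : Fin j → Y) : 0 ≤ w z := pathWeight_mul_like_nonneg hP0 hd z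
  calc |objTerm P γ θ c t h (Distortion.undistorted Y) j|
      = γ ^ j * |∑ z, w z * c (t + j) (extHist h z)| := by
        rw [objTerm, abs_mul, abs_of_nonneg (pow_nonneg hγ j)]
        simp only [condEnt_undistorted, mul_zero, add_zero, w]
    _ ≤ γ ^ j * ∑ z, |w z * c (t + j) (extHist h z)| := by
        gcongr
        exact abs_sum_le_sum_abs _ _
    _ ≤ γ ^ j * ∑ z, w z * C := by
        gcongr with z
        rw [abs_mul, abs_of_nonneg (hw z)]
        exact mul_le_mul_of_nonneg_left (hc _ _) (hw z)
    _ = C * γ ^ j := by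
        rw [← sum_mul, sum_pathWeight_mul_like_eq_one hd]
        ring

theorem nonempty_objective_values (hP0 : ∀ y y', 0 ≤ P y y') (hP1 : ∀ y, ∑ y', P y y' = 1)
    (hγ0 : 0 ≤ γ) (hγ1 : γ < 1) (hc : ∀ n h, |c n h| ≤ C) :
    {v : ℝ | ∃ d, Admissible P (h (Fin.last t)) d ∧
      Summable (objTerm P γ θ c t h d) ∧ v = ∑' j, objTerm P γ θ c t h d j}.Nonempty :=
  ⟨_, Distortion.undistorted Y, .undistorted hP1,
    .of_norm_bounded ((summable_geometric_of_lt_one hγ0 hγ1).mul_left C)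
      (abs_objTerm_undistorted_le hP0 hP1 hγ0 hc), rfl⟩

theorem summable_objTerm_tail (hP0 : ∀ y y', 0 ≤ P y y') (hP1 : ∀ y, ∑ y', P y y' = 1)
    (hγ0 : 0 < γ) (hγ1 : γ < 1) (hθ : 0 ≤ θ) (hc : ∀ n h, -C ≤ c n h)
    (hd : Admissible P (h (Fin.last t)) d) (hs : Summable (objTerm P γ θ c t h d)) {y : Y}
    (hy : P (h (Fin.last t)) y * d.head y ≠ 0) :
    Summable (objTerm P γ θ c (t + 1) (Fin.snoc h y) (d.tail y)) := by
  have hmean : Summable fun j => ∑ y', P (h (Fin.last t)) y' * d.head y' *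
      objTerm P γ θ c (t + 1) (Fin.snoc h y') (d.tail y') j :=
    (summable_mul_left_iff hγ0.ne').1 <| by
      simpa only [objTerm_succ] using (summable_nat_add_iff 1).2 hs
  refine summable_of_summable_sum_mul
    (fun y' _ => mul_nonneg (hP0 _ y') (hd.head_mem_likelihoodRatios.1 y'))
    ((summable_geometric_of_lt_one hγ0.le hγ1).mul_left C).neg (fun y' _ => ?_) hmean
    (mem_univ y) hy
  refine neg_mul_pow_le_objTerm hP0 hP1 hγ0.le hθ hc ?_
  simpa only [Fin.snoc_last] using hd.tail y'

theorem seqVal_le_tsum_objTerm (hP0 : ∀ y y', 0 ≤ P y y') (hP1 : ∀ y, ∑ y', P y y' = 1)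
    (hγ0 : 0 ≤ γ) (hγ1 : γ < 1) (hθ : 0 ≤ θ) (hc : ∀ n h, -C ≤ c n h)
    (hd : Admissible P (h (Fin.last t)) d) (hs : Summable (objTerm P γ θ c t h d)) :
    seqVal P γ θ c t h ≤ ∑' j, objTerm P γ θ c t h d j := by
  refine csInf_le ⟨∑' j, -(C * γ ^ j), ?_⟩ ⟨d, hd, hs, rfl⟩
  rintro _ ⟨e, he, hse, rfl⟩
  exact Summable.tsum_le_tsum (neg_mul_pow_le_objTerm hP0 hP1 hγ0 hθ hc he)
    ((summable_geometric_of_lt_one hγ0 hγ1).mul_left C).neg hse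

end Bounds

section Bellman

variable {Y : Type} [Fintype Y] {P : Y → Y → ℝ} {γ θ C : ℝ}
  {c : (n : ℕ) → (Fin (n + 1) → Y) → ℝ} {t : ℕ} {h : Fin (t + 1) → Y}

theorem exists_tsum_objTerm_lt_seqVal_add (hP0 : ∀ y y', 0 ≤ P y y')
    (hP1 : ∀ y, ∑ y', P y y' = 1) (hγ0 : 0 ≤ γ) (hγ1 : γ < 1) (hc : ∀ n h, |c n h| ≤ C)
    (h : Fin (t + 1) → Y) {ε : ℝ} (hε : 0 < ε) :
    ∃ d, Admissible P (h (Fin.last t)) d ∧ Summable (objTerm P γ θ c t h d) ∧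
      ∑' j, objTerm P γ θ c t h d j < seqVal P γ θ c t h + ε := by
  obtain ⟨_, ⟨d, hd, hs, rfl⟩, hlt⟩ :=
    Real.lt_sInf_add_pos (nonempty_objective_values hP0 hP1 hγ0 hγ1 hc) hε
  exact ⟨d, hd, hs, hlt⟩

theorem seqVal_le_add_mul_penalizedMean (hP0 : ∀ y y', 0 ≤ P y y')
    (hP1 : ∀ y, ∑ y', P y y' = 1) (hγ0 : 0 ≤ γ) (hγ1 : γ < 1) (hθ : 0 ≤ θ)
    (hc : ∀ n h, |c n h| ≤ C) {m : Y → ℝ} (hm : m ∈ likelihoodRatios P (h (Fin.last t))) :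
    seqVal P γ θ c t h ≤ c t h + γ * penalizedMean P θ
      (fun y => seqVal P γ θ c (t + 1) (Fin.snoc h y)) m (h (Fin.last t)) := by
  set V : Y → ℝ := fun y => seqVal P γ θ c (t + 1) (Fin.snoc h y)
  refine le_of_forall_pos_le_add fun ε hε => ?_
  choose D hD hDs hDε using fun y =>
    exists_tsum_objTerm_lt_seqVal_add (θ := θ) hP0 hP1 hγ0 hγ1 hc (Fin.snoc h y) hε
  simp only [Fin.snoc_last] at hD
  have hsum := hasSum_objTerm P γ θ c t h (.cons m D) fun y _ => by
    simpa only [Distortion.tail_cons] using hDs y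
  simp only [Distortion.head_cons, Distortion.tail_cons] at hsum
  calc seqVal P γ θ c t h
      ≤ c t h + γ * penalizedMean P θ
          (fun y => ∑' j, objTerm P γ θ c (t + 1) (Fin.snoc h y) (D y) j) m (h (Fin.last t)) := by
        rw [← hsum.tsum_eq]
        exact seqVal_le_tsum_objTerm hP0 hP1 hγ0 hγ1 hθ (fun n h => neg_le_of_abs_le (hc n h))
          (.cons hm hD) hsum.summable
    _ ≤ c t h + γ * penalizedMean P θ (fun y => V y + ε) m (h (Fin.last t)) := by
        gcongr
        exact penalizedMean_mono (hP0 _) hm.1 fun y _ => (hDε y).le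
    _ = c t h + γ * penalizedMean P θ V m (h (Fin.last t)) + γ * ε := by
        rw [penalizedMean_add_const hm]
        ring
    _ ≤ c t h + γ * penalizedMean P θ V m (h (Fin.last t)) + ε := by
        gcongr
        exact mul_le_of_le_one_left hε.le hγ1.le

theorem add_mul_penalizedMean_le_tsum_objTerm (hP0 : ∀ y y', 0 ≤ P y y')
    (hP1 : ∀ y, ∑ y', P y y' = 1) (hγ0 : 0 < γ) (hγ1 : γ < 1) (hθ : 0 ≤ θ)
    (hc : ∀ n h, -C ≤ c n h) {d : Distortion Y} (hd : Admissible P (h (Fin.last t)) d)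
    (hs : Summable (objTerm P γ θ c t h d)) :
    c t h + γ * penalizedMean P θ (fun y => seqVal P γ θ c (t + 1) (Fin.snoc h y))
      d.head (h (Fin.last t)) ≤ ∑' j, objTerm P γ θ c t h d j := by
  have htail (y : Y) := summable_objTerm_tail (y := y) hP0 hP1 hγ0 hγ1 hθ hc hd hs
  rw [(hasSum_objTerm P γ θ c t h d htail).tsum_eq]
  gcongr
  refine penalizedMean_mono (hP0 _) hd.head_mem_likelihoodRatios.1 fun y hy => ?_
  refine seqVal_le_tsum_objTerm hP0 hP1 hγ0.le hγ1 hθ hc ?_ (htail y hy)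
  simpa only [Fin.snoc_last] using hd.tail y

end Bellman

theorem stmt6_general {Y : Type} [Fintype Y]
    (P : Y → Y → ℝ) (hP0 : ∀ y y', 0 ≤ P y y') (hP1 : ∀ y, ∑ y', P y y' = 1)
    (γ θ C : ℝ) (hγ0 : 0 < γ) (hγ1 : γ < 1) (hθ : 0 < θ)
    (c : (n : ℕ) → (Fin (n + 1) → Y) → ℝ) (hc : ∀ n h, |c n h| ≤ C)
    (t : ℕ) (h : Fin (t + 1) → Y) :
    let V : Y → ℝ := fun y' => seqVal P γ θ c (t + 1) (Fin.snoc h y')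
    let v : ℝ := entropicCertaintyEquiv P θ V (h (Fin.last t))
    IsLeast {w : ℝ | ∃ m : Y → ℝ, (∀ y', 0 ≤ m y') ∧
        (∑ y', P (h (Fin.last t)) y' * m y' = 1) ∧
        w = (∑ y', P (h (Fin.last t)) y' * m y' * V y') + θ * condEnt P m (h (Fin.last t))} v ∧
      seqVal P γ θ c t h = c t h + γ * v := by
  intro V v
  have hleast : IsLeast {w | ∃ m ∈ likelihoodRatios P (h (Fin.last t)),
      w = penalizedMean P θ V m (h (Fin.last t))} v :=
    isLeast_entropicCertaintyEquiv (hP0 _) (hP1 _) hθ V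
  refine ⟨?_, le_antisymm ?_ ?_⟩
  · simpa only [likelihoodRatios, penalizedMean, Set.mem_ofPred_eq, and_assoc] using hleast
  · obtain ⟨m, hm, hv⟩ := hleast.1
    rw [hv]
    exact seqVal_le_add_mul_penalizedMean hP0 hP1 hγ0.le hγ1 hθ.le hc hm
  · refine le_csInf (nonempty_objective_values hP0 hP1 hγ0.le hγ1 hc) ?_
    rintro _ ⟨d, hd, hs, rfl⟩
    calc c t h + γ * v
        ≤ c t h + γ * penalizedMean P θ V (Distortion.head d) (h (Fin.last t)) := by
          gcongr
          exact hleast.2 ⟨_, hd.head_mem_likelihoodRatios, rfl⟩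
      _ ≤ ∑' j, objTerm P γ θ c t h d j :=
          add_mul_penalizedMean_le_tsum_objTerm hP0 hP1 hγ0 hγ1 hθ.le
            (fun n h => neg_le_of_abs_le (hc n h)) hd hs

/-- **Bellman equation for the minimizing agent's sequential problem (SP-MA ⇒ FP-MA).**
If for every `t` and history `y^t` the infimum defining `𝕌_t(y^t)` is attained by some
distortion sequence, then for every `t` and `y^t`:
`𝕌_t(y^t) = c_t(y^t) + γ · inf_{m ∈ 𝓜(y_t)} [ Σ_{y'} P(y_t,y') m(y') 𝕌_{t+1}(y^t,y')
+ θ·ℰ[m](y_t) ]`, and the infimum on the right-hand side is attained. -/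
theorem stmt6 {Y : Type} [Fintype Y] [Nonempty Y]
    (P : Y → Y → ℝ) (hP0 : ∀ y y', 0 ≤ P y y') (hP1 : ∀ y, ∑ y', P y y' = 1)
    (γ θ C : ℝ) (hγ0 : 0 < γ) (hγ1 : γ < 1) (hθ : 0 < θ) (hC : 0 < C)
    (c : (n : ℕ) → (Fin (n + 1) → Y) → ℝ) (hc : ∀ n h, |c n h| ≤ C)
    (hattain : ∀ (t : ℕ) (h : Fin (t + 1) → Y),
      ∃ d, Admissible P (h (Fin.last t)) d ∧ Summable (objTerm P γ θ c t h d) ∧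
        (∑' j, objTerm P γ θ c t h d j) = seqVal P γ θ c t h) :
    ∀ (t : ℕ) (h : Fin (t + 1) → Y),
      ∃ v : ℝ,
        IsLeast {w : ℝ | ∃ m : Y → ℝ, (∀ y', 0 ≤ m y') ∧
            (∑ y', P (h (Fin.last t)) y' * m y' = 1) ∧
            w = (∑ y', P (h (Fin.last t)) y' * m y' *
                  seqVal P γ θ c (t + 1) (Fin.snoc h y'))
                + θ * condEnt P m (h (Fin.last t))} v ∧
        seqVal P γ θ c t h = c t h + γ * v :=
  fun t h => ⟨_, stmt6_general P hP0 hP1 γ θ C hγ0 hγ1 hθ c hc t h⟩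
end

section
/- Let μ be a probability measure on ℝ, let S : ℝ → [0,∞) be measurable and antitone (nonincreasing), and suppose 0 < ∫ S dμ = γ < ∞. Define the measure ν with density S/γ with respect to μ. Then ν is a probability measure and ν is first-order stochastically dominated by μ: for every t ∈ ℝ, ν((−∞, t]) ≥ μ((−∞, t]). -/
open MeasureTheory

/-!
If `f` is larger everywhere on `s` than on `t`, then any constant `c` separating the values of `f`
on `t` from those on `s` gives `μ s * ∫⁻ x in t, f x ∂μ ≤ μ s * c * μ t ≤ μ t * ∫⁻ x in s, f x ∂μ`.
For `f` antitone, `s` a lower set and `t = sᶜ`, adding `μ s * ∫⁻ x in s, f x ∂μ` to both sides shows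
that `f` has a larger average over `s` than over the whole space; for a density, whose overall
average is `1`, this is the asserted domination.
-/

section LIntegral

variable {α : Type*} [MeasurableSpace α] {μ : Measure α} {f : α → ENNReal} {s t : Set α}

theorem measure_mul_setLIntegral_le_of_forall_le (hs : MeasurableSet s) (ht : MeasurableSet t)
    (hf : ∀ x ∈ s, ∀ y ∈ t, f y ≤ f x) :
    μ s * ∫⁻ x in t, f x ∂μ ≤ μ t * ∫⁻ x in s, f x ∂μ := by
  set c := ⨆ y ∈ t, f y
  have setLIntegral_le : ∫⁻ x in t, f x ∂μ ≤ c * μ t := by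
    rw [← setLIntegral_const]
    exact setLIntegral_mono' ht fun y hy => le_iSup₂ (f := fun y _ => f y) y hy
  have le_setLIntegral : c * μ s ≤ ∫⁻ x in s, f x ∂μ := by
    rw [← setLIntegral_const]
    exact setLIntegral_mono' hs fun x hx => iSup₂_le (hf x hx)
  calc μ s * ∫⁻ x in t, f x ∂μ ≤ μ s * (c * μ t) := by gcongr
    _ = μ t * (c * μ s) := by ring
    _ ≤ μ t * ∫⁻ x in s, f x ∂μ := by gcongr

theorem measure_mul_lintegral_le_of_antitone_of_isLowerSet [LinearOrder α] (hf : Antitone f)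
    (hs : IsLowerSet s) (hsm : MeasurableSet s) :
    μ s * ∫⁻ x, f x ∂μ ≤ μ Set.univ * ∫⁻ x in s, f x ∂μ := by
  have f_compl_le : ∀ x ∈ s, ∀ y ∈ sᶜ, f y ≤ f x := fun x hx y hy =>
    hf (le_of_not_ge fun hyx => hy (hs hyx hx))
  rw [← lintegral_add_compl f hsm, ← measure_add_measure_compl hsm, mul_add, add_mul]
  exact add_le_add_right (measure_mul_setLIntegral_le_of_forall_le hsm hsm.compl f_compl_le) _

theorem measure_le_withDensity_of_antitone_of_isLowerSet [LinearOrder α] [IsProbabilityMeasure μ]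
    [IsProbabilityMeasure (μ.withDensity f)] (hf : Antitone f)
    (hs : IsLowerSet s) (hsm : MeasurableSet s) : μ s ≤ μ.withDensity f s := by
  have lintegral_eq_one : ∫⁻ x, f x ∂μ = 1 := by
    rw [← setLIntegral_univ, ← withDensity_apply f .univ, measure_univ]
  simpa only [lintegral_eq_one, mul_one, measure_univ, one_mul, withDensity_apply f hsm] using
    measure_mul_lintegral_le_of_antitone_of_isLowerSet (μ := μ) hf hs hsm

end LIntegral

theorem isProbabilityMeasure_withDensity_ofReal_div_integral {α : Type*} [MeasurableSpace α]
    {μ : Measure α} {g : α → ℝ} (hg : 0 ≤ᵐ[μ] g) (hg_integral : ∫ x, g x ∂μ ≠ 0) :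
    IsProbabilityMeasure (μ.withDensity fun x => ENNReal.ofReal (g x / ∫ y, g y ∂μ)) := by
  have g_div_nonneg : 0 ≤ᵐ[μ] fun x => g x / ∫ y, g y ∂μ :=
    hg.mono fun x hx => div_nonneg hx (integral_nonneg_of_ae hg)
  have g_integrable : Integrable g μ := .of_integral_ne_zero hg_integral
  constructor
  rw [withDensity_apply _ .univ, setLIntegral_univ,
    ← ofReal_integral_eq_lintegral_ofReal (g_integrable.div_const _) g_div_nonneg,
    integral_div, div_self hg_integral, ENNReal.ofReal_one]

theorem stmt9_general {α : Type*} [LinearOrder α] [MeasurableSpace α] (μ : Measure α)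
    [IsProbabilityMeasure μ] (S : α → ℝ) (hS0 : 0 ≤ᵐ[μ] S) (hSanti : Antitone S)
    (γ : ℝ) (hγpos : 0 < γ) (hγ : ∫ x, S x ∂μ = γ) :
    IsProbabilityMeasure (μ.withDensity fun x => ENNReal.ofReal (S x / γ)) ∧
    ∀ s : Set α, IsLowerSet s → MeasurableSet s →
      μ s ≤ (μ.withDensity fun x => ENNReal.ofReal (S x / γ)) s := by
  have density_antitone : Antitone fun x => ENNReal.ofReal (S x / γ) := fun x y hxy =>
    ENNReal.ofReal_le_ofReal (div_le_div_of_nonneg_right (hSanti hxy) hγpos.le)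
  have hprob : IsProbabilityMeasure (μ.withDensity fun x => ENNReal.ofReal (S x / γ)) := by
    subst hγ
    exact isProbabilityMeasure_withDensity_ofReal_div_integral hS0 hγpos.ne'
  exact ⟨hprob, fun s => measure_le_withDensity_of_antitone_of_isLowerSet density_antitone⟩

/-- **Nonincreasing pricing kernels induce first-order stochastically dominated laws.**
If `μ` is a probability measure on `ℝ`, `S : ℝ → [0,∞)` is measurable and nonincreasing with
`0 < ∫ S dμ = γ < ∞`, then the measure `ν` with density `S/γ` w.r.t. `μ` is a probability
measure and is first-order stochastically dominated by `μ`: `ν((−∞,t]) ≥ μ((−∞,t])` for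
every `t`. -/
theorem stmt9 (μ : Measure ℝ) [IsProbabilityMeasure μ]
    (S : ℝ → ℝ) (hSmeas : Measurable S) (hS0 : ∀ x, 0 ≤ S x) (hSanti : Antitone S)
    (hSint : Integrable S μ)
    (γ : ℝ) (hγpos : 0 < γ) (hγ : ∫ x, S x ∂μ = γ) :
    IsProbabilityMeasure (μ.withDensity fun x => ENNReal.ofReal (S x / γ)) ∧
    ∀ t : ℝ, μ (Set.Iic t) ≤ (μ.withDensity fun x => ENNReal.ofReal (S x / γ)) (Set.Iic t) := by
  obtain ⟨hprob, hle⟩ := stmt9_general μ S (ae_of_all μ hS0) hSanti γ hγpos hγ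
  exact ⟨hprob, fun t => hle (Set.Iic t) (isLowerSet_Iic t) measurableSet_Iic⟩
end

section
/- Let (Ω, 𝓕, P) be a probability space, W : Ω → ℝ bounded and measurable, and θ > 0. Let P̃ be the probability measure with density exp(−W/θ) / ∫ exp(−W/θ) dP with respect to P. Then for every c ∈ ℝ, P̃(W ≤ c) ≥ P(W ≤ c). -/
open MeasureTheory

/-!
With respect to `P`, the density of `P.tilted f` is an increasing function of `f`, so it is at least
its value `k` at level `a` on `{a ≤ f}`, and at most `k` off it. If `ν` has density at least `k` on
`s` and at most `k` off `s`, then `μ s * ν sᶜ ≤ k * μ s * μ sᶜ ≤ ν s * μ sᶜ`, and adding `μ s * ν s`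
to both ends gives `μ s * ν univ ≤ ν s * μ univ`. The theorem is the case `f = -W / θ`, whose
superlevel sets are the sublevel sets of `W`.
-/

open scoped ENNReal

section WithDensity

variable {Ω : Type*} [MeasurableSpace Ω] {μ : Measure Ω} {g : Ω → ℝ≥0∞} {k : ℝ≥0∞} {s : Set Ω}

theorem mul_measure_le_withDensity_apply (hg : ∀ᵐ ω ∂μ.restrict s, k ≤ g ω) :
    k * μ s ≤ μ.withDensity g s :=
  calc
    k * μ s = ∫⁻ _ in s, k ∂μ := (setLIntegral_const s k).symm
    _ ≤ ∫⁻ ω in s, g ω ∂μ := lintegral_mono_ae hg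
    _ ≤ μ.withDensity g s := withDensity_apply_le g s

theorem withDensity_apply_le_mul_measure (hs : NullMeasurableSet s μ)
    (hg : ∀ᵐ ω ∂μ.restrict s, g ω ≤ k) : μ.withDensity g s ≤ k * μ s :=
  calc
    μ.withDensity g s = ∫⁻ ω in s, g ω ∂μ := withDensity_apply₀ g hs
    _ ≤ ∫⁻ _ in s, k ∂μ := lintegral_mono_ae hg
    _ = k * μ s := setLIntegral_const s k

theorem measure_mul_withDensity_compl_le (hs : NullMeasurableSet s μ)
    (hle : ∀ᵐ ω ∂μ.restrict s, k ≤ g ω) (hge : ∀ᵐ ω ∂μ.restrict sᶜ, g ω ≤ k) :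
    μ s * μ.withDensity g sᶜ ≤ μ.withDensity g s * μ sᶜ :=
  calc
    μ s * μ.withDensity g sᶜ ≤ μ s * (k * μ sᶜ) := by
      gcongr
      exact withDensity_apply_le_mul_measure hs.compl hge
    _ = k * μ s * μ sᶜ := by ring
    _ ≤ μ.withDensity g s * μ sᶜ := by
      gcongr
      exact mul_measure_le_withDensity_apply hle

theorem measure_mul_withDensity_univ_le (hs : NullMeasurableSet s μ)
    (hle : ∀ᵐ ω ∂μ.restrict s, k ≤ g ω) (hge : ∀ᵐ ω ∂μ.restrict sᶜ, g ω ≤ k) :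
    μ s * μ.withDensity g Set.univ ≤ μ.withDensity g s * μ Set.univ := by
  have hsν : NullMeasurableSet s (μ.withDensity g) :=
    hs.mono_ac (withDensity_absolutelyContinuous μ g)
  rw [← measure_add_measure_compl₀ hs, ← measure_add_measure_compl₀ hsν, mul_add, mul_add,
    mul_comm (μ s) (μ.withDensity g s)]
  gcongr _ + ?_
  exact measure_mul_withDensity_compl_le hs hle hge

end WithDensity

section Tilted

variable {Ω : Type*} [MeasurableSpace Ω]

theorem integrable_exp_neg_div_of_ge {μ : Measure Ω} [IsFiniteMeasure μ] {W : Ω → ℝ}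
    (hW : AEMeasurable W μ) {b : ℝ} (hb : ∀ᵐ ω ∂μ, b ≤ W ω) {θ : ℝ} (hθ : 0 ≤ θ) :
    Integrable (fun ω => Real.exp (-W ω / θ)) μ := by
  have h := ProbabilityTheory.integrable_exp_mul_of_le θ⁻¹ (-b) (inv_nonneg.2 hθ) hW.neg
    (hb.mono fun _ hω => neg_le_neg hω)
  simpa only [Pi.neg_apply, div_eq_inv_mul] using h

theorem measure_superlevel_le_tilted_mul_univ {μ : Measure Ω} {f : Ω → ℝ}
    (hf : Integrable (fun ω => Real.exp (f ω)) μ) (a : ℝ) :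
    μ {ω | a ≤ f ω} ≤ μ.tilted f {ω | a ≤ f ω} * μ Set.univ := by
  rcases eq_zero_or_neZero μ with rfl | _
  · simp
  have hs : NullMeasurableSet {ω | a ≤ f ω} μ :=
    nullMeasurableSet_le aemeasurable_const (Real.aemeasurable_of_aemeasurable_exp hf.aemeasurable)
  have density_mono {x y : ℝ} (hxy : x ≤ y) :
      ENNReal.ofReal (Real.exp x / ∫ ω, Real.exp (f ω) ∂μ) ≤
        ENNReal.ofReal (Real.exp y / ∫ ω, Real.exp (f ω) ∂μ) := by
    gcongr
  have : IsProbabilityMeasure (μ.tilted f) := isProbabilityMeasure_tilted hf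
  calc
    μ {ω | a ≤ f ω} = μ {ω | a ≤ f ω} * μ.tilted f Set.univ := by rw [measure_univ, mul_one]
    _ ≤ μ.tilted f {ω | a ≤ f ω} * μ Set.univ :=
      measure_mul_withDensity_univ_le hs
        ((ae_restrict_mem₀ hs).mono fun _ hω => density_mono hω)
        ((ae_restrict_mem₀ hs.compl).mono fun _ hω => density_mono (le_of_not_ge fun h => hω h))

theorem stmt10_general (P : Measure Ω) [IsProbabilityMeasure P] {W : Ω → ℝ} {θ : ℝ} (hθ : 0 < θ)
    (hW : Integrable (fun ω => Real.exp (-W ω / θ)) P) (c : ℝ) :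
    P {ω | W ω ≤ c} ≤ P.tilted (fun ω => -W ω / θ) {ω | W ω ≤ c} := by
  simpa only [div_le_div_iff_of_pos_right hθ, neg_le_neg_iff, measure_univ, mul_one] using
    measure_superlevel_le_tilted_mul_univ hW (-c / θ)

end Tilted

/-- **The worst-case Gibbs measure slants mass toward low-utility states.**
If `W : Ω → ℝ` is bounded measurable, `θ > 0`, and `P̃` is the probability measure with
density `exp(−W/θ)/∫ exp(−W/θ) dP` with respect to `P`, then for every `c ∈ ℝ`,
`P̃(W ≤ c) ≥ P(W ≤ c)`. -/
theorem stmt10 {Ω : Type*} [MeasurableSpace Ω] (P : Measure Ω) [IsProbabilityMeasure P]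
    (W : Ω → ℝ) (hWmeas : Measurable W) (C : ℝ) (hWbd : ∀ ω, |W ω| ≤ C)
    (θ : ℝ) (hθ : 0 < θ)
    (Pt : Measure Ω)
    (hPt : Pt = P.withDensity fun ω =>
      ENNReal.ofReal (Real.exp (-W ω / θ) / ∫ ω', Real.exp (-W ω' / θ) ∂P)) :
    ∀ c : ℝ, P {ω | W ω ≤ c} ≤ Pt {ω | W ω ≤ c} := by
  subst hPt
  exact stmt10_general P hθ (integrable_exp_neg_div_of_ge hWmeas.aemeasurable
    (ae_of_all P fun ω => neg_le_of_abs_le (hWbd ω)) hθ.le)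
end

section
/- Let (Ω, 𝓕, P) be a probability space and U : Ω → ℝ bounded and measurable. Then lim_{θ → ∞} ( −θ · log ∫ exp(−U/θ) dP ) = ∫ U dP. -/
open MeasureTheory

/-!
The entropic value at `θ` is `-θ * K θ⁻¹`, where `K` is the cumulant generating function of `-U`.
Since `K 0 = 0`, it is minus the difference quotient of `K` between `0` and `θ⁻¹`, and so tends to
minus the right derivative of `K` at `0`, which is the mean of `-U`. That derivative exists as soon
as `U` and, for some `s > 0`, `exp (-s * U)` are integrable: by convexity the difference quotients
`(exp (t * x) - 1) / t` decrease to `x` as `t ↓ 0`, so those with `0 < t ≤ s` lie between `x` and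
the quotient at `s`, and dominated convergence applies.
-/

section Cgf

open Filter ProbabilityTheory Real Set
open scoped Topology

lemma convexOn_exp_mul_const (x : ℝ) : ConvexOn ℝ univ fun t : ℝ ↦ exp (t * x) :=
  convexOn_exp.comp_linearMap (LinearMap.mulRight ℝ x)

lemma hasDerivAt_exp_mul_const_zero (x : ℝ) : HasDerivAt (fun t : ℝ ↦ exp (t * x)) x 0 := by
  simpa using ((hasDerivAt_id (0 : ℝ)).mul_const x).exp

lemma abs_slope_exp_mul_const_le {s t : ℝ} (ht : 0 < t) (hts : t ≤ s) (x : ℝ) :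
    |slope (fun u ↦ exp (u * x)) 0 t| ≤ max |x| |slope (fun u ↦ exp (u * x)) 0 s| := by
  have h_convex := convexOn_exp_mul_const x
  have h_lower : x ≤ slope (fun u ↦ exp (u * x)) 0 t :=
    h_convex.le_slope_of_hasDerivAt (mem_univ 0) (mem_univ t) ht (hasDerivAt_exp_mul_const_zero x)
  have h_upper : slope (fun u ↦ exp (u * x)) 0 t ≤ slope (fun u ↦ exp (u * x)) 0 s :=
    h_convex.slope_mono (mem_univ 0) ⟨mem_univ t, ht.ne'⟩ ⟨mem_univ s, (ht.trans_le hts).ne'⟩ hts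
  exact abs_le_max_abs_abs h_lower h_upper

variable {Ω : Type*} {mΩ : MeasurableSpace Ω} {μ : Measure Ω} [IsFiniteMeasure μ] {X : Ω → ℝ}
  {s : ℝ}

lemma integrable_slope_exp_mul (hX : Integrable (fun ω ↦ exp (s * X ω)) μ) :
    Integrable (fun ω ↦ slope (fun u ↦ exp (u * X ω)) 0 s) μ := by
  simp only [slope_def_field, zero_mul, exp_zero]
  exact (hX.sub (integrable_const 1)).div_const _

lemma slope_mgf_zero (hX : Integrable (fun ω ↦ exp (s * X ω)) μ) :
    slope (mgf X μ) 0 s = ∫ ω, slope (fun u ↦ exp (u * X ω)) 0 s ∂μ := by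
  simp only [slope_def_field, mgf, zero_mul, exp_zero]
  rw [integral_div, integral_sub hX (integrable_const 1)]

theorem hasDerivWithinAt_Ioi_mgf_zero (hX : Integrable X μ) (hs : 0 < s)
    (h_exp : Integrable (fun ω ↦ exp (s * X ω)) μ) :
    HasDerivWithinAt (mgf X μ) (∫ ω, X ω ∂μ) (Ioi 0) 0 := by
  have h_near : ∀ᶠ t in 𝓝[>] (0 : ℝ), t ∈ Ioc 0 s := Ioc_mem_nhdsGT hs
  have h_int : ∀ t ∈ Ioc 0 s, Integrable (fun ω ↦ exp (t * X ω)) μ := fun t ht ↦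
    integrable_exp_mul_of_nonneg_of_le h_exp ht.1.le ht.2
  have h_tendsto : Tendsto (fun t ↦ ∫ ω, slope (fun u ↦ exp (u * X ω)) 0 t ∂μ) (𝓝[>] 0)
      (𝓝 (∫ ω, X ω ∂μ)) := by
    refine tendsto_integral_filter_of_dominated_convergence
      (fun ω ↦ max |X ω| |slope (fun u ↦ exp (u * X ω)) 0 s|) ?_ ?_ ?_ ?_
    · filter_upwards [h_near] with t ht
      exact (integrable_slope_exp_mul (h_int t ht)).aestronglyMeasurable
    · filter_upwards [h_near] with t ht
      exact .of_forall fun ω ↦ abs_slope_exp_mul_const_le ht.1 ht.2 (X ω)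
    · exact hX.abs.sup (integrable_slope_exp_mul h_exp).abs
    · exact .of_forall fun ω ↦ (hasDerivWithinAt_iff_tendsto_slope' self_notMem_Ioi).1
        (hasDerivAt_exp_mul_const_zero (X ω)).hasDerivWithinAt
  refine (hasDerivWithinAt_iff_tendsto_slope' self_notMem_Ioi).2 (h_tendsto.congr' ?_)
  filter_upwards [h_near] with t ht
  exact (slope_mgf_zero (h_int t ht)).symm

theorem hasDerivWithinAt_Ioi_cgf_zero [NeZero μ] (hX : Integrable X μ) (hs : 0 < s)
    (h_exp : Integrable (fun ω ↦ exp (s * X ω)) μ) :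
    HasDerivWithinAt (cgf X μ) ((∫ ω, X ω ∂μ) / μ.real univ) (Ioi 0) 0 := by
  have h_ne : mgf X μ 0 ≠ 0 := (mgf_pos' (NeZero.ne μ) (by simp)).ne'
  rw [← mgf_zero' (X := X)]
  exact (hasDerivWithinAt_Ioi_mgf_zero hX hs h_exp).log h_ne

theorem tendsto_mul_cgf_inv_atTop {P : Measure Ω} [IsProbabilityMeasure P] (hX : Integrable X P)
    (hs : 0 < s) (h_exp : Integrable (fun ω ↦ exp (s * X ω)) P) :
    Tendsto (fun θ ↦ θ * cgf X P θ⁻¹) atTop (𝓝 (∫ ω, X ω ∂P)) := by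
  have h_slope : Tendsto (slope (cgf X P) 0) (𝓝[>] 0) (𝓝 (∫ ω, X ω ∂P)) := by
    simpa using (hasDerivWithinAt_iff_tendsto_slope' self_notMem_Ioi).1
      (hasDerivWithinAt_Ioi_cgf_zero hX hs h_exp)
  refine (h_slope.comp tendsto_inv_atTop_nhdsGT_zero).congr fun θ ↦ ?_
  simp [slope_def_field, div_eq_mul_inv, mul_comm]

end Cgf

theorem stmt14_general {Ω : Type*} [MeasurableSpace Ω] {P : Measure Ω} [IsProbabilityMeasure P]
    {U : Ω → ℝ} {s : ℝ} (hU : Integrable U P) (hs : 0 < s)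
    (h_exp : Integrable (fun ω ↦ Real.exp (-s * U ω)) P) :
    Filter.Tendsto (fun θ : ℝ => -θ * Real.log (∫ ω, Real.exp (-U ω / θ) ∂P))
      Filter.atTop (nhds (∫ ω, U ω ∂P)) := by
  have h_exp_neg : Integrable (fun ω ↦ Real.exp (s * (-U) ω)) P := by
    simpa only [Pi.neg_apply, mul_neg, neg_mul] using h_exp
  have h_lim := (tendsto_mul_cgf_inv_atTop hU.neg hs h_exp_neg).neg
  simp only [Pi.neg_apply, integral_neg, neg_neg] at h_lim
  refine h_lim.congr fun θ ↦ ?_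
  simp only [ProbabilityTheory.cgf, ProbabilityTheory.mgf, Pi.neg_apply, neg_mul, div_eq_inv_mul]

/-- **No model uncertainty in the limit `θ → ∞`.**
For bounded measurable `U` on a probability space,
`lim_{θ→∞} (−θ · log ∫ exp(−U/θ) dP) = ∫ U dP`. -/
theorem stmt14 {Ω : Type*} [MeasurableSpace Ω] (P : Measure Ω) [IsProbabilityMeasure P]
    (U : Ω → ℝ) (hUmeas : Measurable U) (C : ℝ) (hUbd : ∀ ω, |U ω| ≤ C) :
    Filter.Tendsto (fun θ : ℝ => -θ * Real.log (∫ ω, Real.exp (-U ω / θ) ∂P))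
      Filter.atTop (nhds (∫ ω, U ω ∂P)) :=
  stmt14_general (.of_bound hUmeas.aestronglyMeasurable C (.of_forall hUbd)) one_pos <|
    ProbabilityTheory.integrable_exp_mul_of_mem_Icc hUmeas.aemeasurable
      (.of_forall fun ω ↦ abs_le.1 (hUbd ω))
end

section
/- Suppose bounded functions W_R : Y × 𝔹 × 𝔹 → ℝ and W_A : Y → ℝ satisfy the lender's Bellman system with constant endowment z̄ ∈ ℝ: setting W(y', B', b') = δ(y', B')·W_R(y', B', b') + (1 − δ(y', B'))·W_A(y'), for all (y, B, b): W_R(y, B, b) = max_{b' ∈ 𝔹} { z̄ + G(b, b'; Γ(y,B), y) + γ·R_θ[ W(·, Γ(y,B), b') ](y) } and W_A(y) = z̄ + γ·R_θ[ (1−π)·W_A(·) + π·W(·, 0, 0) ](y). Then for every Δ ∈ ℝ, the functions W_R + Δ/(1−γ) and W_A + Δ/(1−γ) satisfy the same system with endowment z̄ + Δ; moreover, at every state the set of maximizers b' is unchanged and the Gibbs weights exp(−W(y', Γ(y,B), b')/θ) / Σ_{y''} P(y, y'')·exp(−W(y'', Γ(y,B), b')/θ) are unchanged. -/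
open Finset

/-- Risk-sensitive operator `R_θ[g](y) = −θ·log Σ_{y'} P(y,y')·exp(−g(y')/θ)`. -/
noncomputable def Rop {Y : Type} [Fintype Y] (P : Y → Y → ℝ) (θ : ℝ) (g : Y → ℝ) (y : Y) : ℝ :=
  -θ * Real.log (∑ y', P y y' * Real.exp (-g y' / θ))

/-- Lender's trading payoff `G(b, b'; B', y) = q(y,B')·(b' − (1−λ)b) − (λ + (1−λ)ψ)·b`,
written as a function of the price `qv = q(y, B')` and the real bond positions. -/
noncomputable def Gpay (qv lam ψ b b' : ℝ) : ℝ :=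
  qv * (b' - (1 - lam) * b) - (lam + (1 - lam) * ψ) * b

/-- Option value `W(y,B,b) = δ(y,B)·W_R(y,B,b) + (1 − δ(y,B))·W_A(y)`. -/
def Wmix {Y B : Type} (δ : Y → B → ℝ) (WR : Y → B → B → ℝ) (WA : Y → ℝ)
    (y : Y) (Bb b : B) : ℝ :=
  δ y Bb * WR y Bb b + (1 - δ y Bb) * WA y

/-- The lender's Bellman system with constant per-period endowment `z`. -/
def SatBellman {Y : Type} [Fintype Y] (P : Y → Y → ℝ) (γ θ : ℝ)
    (Bset : Finset ℝ) (hB0 : (0 : ℝ) ∈ Bset)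
    (q : Y → ↥Bset → ℝ) (lam ψ : ℝ) (Γ : Y → ↥Bset → ↥Bset)
    (δ : Y → ↥Bset → ℝ) (π : ℝ) (z : ℝ)
    (WR : Y → ↥Bset → ↥Bset → ℝ) (WA : Y → ℝ) : Prop :=
  (∀ (y : Y) (Bb b : ↥Bset),
    WR y Bb b = ⨆ b' : ↥Bset,
      (z + Gpay (q y (Γ y Bb)) lam ψ (b : ℝ) (b' : ℝ) +
        γ * Rop P θ (fun y' => Wmix δ WR WA y' (Γ y Bb) b') y)) ∧
  (∀ y : Y,
    WA y = z + γ * Rop P θ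
      (fun y' => (1 - π) * WA y' + π * Wmix δ WR WA y' ⟨0, hB0⟩ ⟨0, hB0⟩) y)

/-!
The risk-sensitive operator is translation equivariant, `R_θ[g + c] = R_θ[g] + c`, because adding
`c` to `g` multiplies every `exp (-g / θ)` by the common factor `exp (-c / θ)`. If the endowment
rises by `(1 - γ) * c` and the continuation values by `c`, each Bellman objective therefore rises by
`(1 - γ) * c + γ * c = c`, uniformly in the portfolio. Hence maximizers do not move and the shifted
values are again a fixed point, while the factor `exp (-c / θ)` cancels from the Gibbs weights.
-/

section ExponentialSums

variable {ι : Type*} [Fintype ι]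

/-- Gibbs weight of the state `i`: the density, relative to `p`, of the worst-case probability
distortion for the continuation value `g`. The distorted probability is `p i` times this weight. -/
noncomputable def gibbsWeight (p : ι → ℝ) (θ : ℝ) (g : ι → ℝ) (i : ι) : ℝ :=
  Real.exp (-g i / θ) / ∑ j, p j * Real.exp (-g j / θ)

lemma exp_neg_add_div (a c θ : ℝ) :
    Real.exp (-(a + c) / θ) = Real.exp (-c / θ) * Real.exp (-a / θ) := by
  rw [← Real.exp_add, neg_add_rev, add_div]

lemma sum_mul_exp_neg_add_div (p g : ι → ℝ) (c θ : ℝ) :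
    ∑ i, p i * Real.exp (-(g i + c) / θ) =
      Real.exp (-c / θ) * ∑ i, p i * Real.exp (-g i / θ) := by
  simp only [exp_neg_add_div, mul_left_comm, Finset.mul_sum]

-- In the pointwise order `0 < p` says that `p` is nonnegative and not identically zero.
lemma sum_mul_exp_pos {p : ι → ℝ} (hp : 0 < p) (f : ι → ℝ) :
    0 < ∑ i, p i * Real.exp (f i) := by
  obtain ⟨hp_nonneg, i, hi⟩ := Pi.lt_def.1 hp
  exact Finset.sum_pos' (fun j _ => mul_nonneg (hp_nonneg j) (Real.exp_pos _).le)
    ⟨i, Finset.mem_univ i, mul_pos hi (Real.exp_pos _)⟩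

lemma pos_of_nonneg_of_sum_eq_one {p : ι → ℝ} (hp : 0 ≤ p) (hsum : ∑ i, p i = 1) : 0 < p :=
  hp.lt_of_ne (by rintro rfl; simp at hsum)

lemma gibbsWeight_add_const (p : ι → ℝ) (θ : ℝ) (g : ι → ℝ) (c : ℝ) (i : ι) :
    gibbsWeight p θ (fun j => g j + c) i = gibbsWeight p θ g i := by
  unfold gibbsWeight
  rw [sum_mul_exp_neg_add_div, exp_neg_add_div, mul_div_mul_left _ _ (Real.exp_ne_zero _)]

end ExponentialSums

lemma wmix_add_const {Y B : Type} (δ : Y → B → ℝ) (WR : Y → B → B → ℝ) (WA : Y → ℝ) (c : ℝ)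
    (y : Y) (Bb b : B) :
    Wmix δ (fun y Bb b => WR y Bb b + c) (fun y => WA y + c) y Bb b =
      Wmix δ WR WA y Bb b + c := by
  unfold Wmix
  ring

section LenderProblem

variable {Y : Type} [Fintype Y] {P : Y → Y → ℝ} {θ : ℝ}

lemma rop_add_const {y : Y} (hP : 0 < P y) (hθ : θ ≠ 0) (g : Y → ℝ) (c : ℝ) :
    Rop P θ (fun y' => g y' + c) y = Rop P θ g y + c := by
  have hlog : Real.log (∑ y', P y y' * Real.exp (-(g y' + c) / θ)) =
      -c / θ + Real.log (∑ y', P y y' * Real.exp (-g y' / θ)) := by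
    rw [sum_mul_exp_neg_add_div,
      Real.log_mul (Real.exp_ne_zero _) (sum_mul_exp_pos hP _).ne', Real.log_exp]
  unfold Rop
  rw [hlog]
  field_simp
  ring

/-- Bellman objective of a lender in good standing: the value, in income state `y` with borrower's
debt `Bb` and own holdings `b`, of choosing the portfolio `b'` under the endowment `z`. -/
noncomputable def lenderObjective (P : Y → Y → ℝ) (γ θ : ℝ) {Bset : Finset ℝ}
    (q : Y → ↥Bset → ℝ) (lam ψ : ℝ) (Γ : Y → ↥Bset → ↥Bset) (δ : Y → ↥Bset → ℝ) (z : ℝ)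
    (WR : Y → ↥Bset → ↥Bset → ℝ) (WA : Y → ℝ) (y : Y) (Bb b b' : ↥Bset) : ℝ :=
  z + Gpay (q y (Γ y Bb)) lam ψ b b' + γ * Rop P θ (fun y' => Wmix δ WR WA y' (Γ y Bb) b') y

/-- Right-hand side of the Bellman equation during market exclusion, when the lender consumes the
endowment `z` and the borrower re-enters, free of debt, with probability `π`. -/
noncomputable def exclusionValue (P : Y → Y → ℝ) (γ θ : ℝ) {Bset : Finset ℝ}
    (hB0 : (0 : ℝ) ∈ Bset) (δ : Y → ↥Bset → ℝ) (π z : ℝ)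
    (WR : Y → ↥Bset → ↥Bset → ℝ) (WA : Y → ℝ) (y : Y) : ℝ :=
  z + γ * Rop P θ (fun y' => (1 - π) * WA y' + π * Wmix δ WR WA y' ⟨0, hB0⟩ ⟨0, hB0⟩) y

variable {γ : ℝ} {Bset : Finset ℝ} {hB0 : (0 : ℝ) ∈ Bset} {q : Y → ↥Bset → ℝ} {lam ψ : ℝ}
  {Γ : Y → ↥Bset → ↥Bset} {δ : Y → ↥Bset → ℝ} {π z : ℝ}
  {WR : Y → ↥Bset → ↥Bset → ℝ} {WA : Y → ℝ} {c : ℝ}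

lemma satBellman_iff :
    SatBellman P γ θ Bset hB0 q lam ψ Γ δ π z WR WA ↔
      (∀ y Bb b, WR y Bb b = ⨆ b', lenderObjective P γ θ q lam ψ Γ δ z WR WA y Bb b b') ∧
      ∀ y, WA y = exclusionValue P γ θ hB0 δ π z WR WA y :=
  Iff.rfl

lemma lenderObjective_add_const {y : Y} (hP : 0 < P y) (hθ : θ ≠ 0) (Bb b b' : ↥Bset) :
    lenderObjective P γ θ q lam ψ Γ δ (z + (1 - γ) * c)
        (fun y Bb b => WR y Bb b + c) (fun y => WA y + c) y Bb b b' =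
      lenderObjective P γ θ q lam ψ Γ δ z WR WA y Bb b b' + c := by
  simp only [lenderObjective, wmix_add_const, rop_add_const hP hθ]
  ring

lemma exclusionValue_add_const {y : Y} (hP : 0 < P y) (hθ : θ ≠ 0) :
    exclusionValue P γ θ hB0 δ π (z + (1 - γ) * c)
        (fun y Bb b => WR y Bb b + c) (fun y => WA y + c) y =
      exclusionValue P γ θ hB0 δ π z WR WA y + c := by
  have hmix (u v : ℝ) : (1 - π) * (u + c) + π * (v + c) = (1 - π) * u + π * v + c := by ring
  simp only [exclusionValue, wmix_add_const, hmix, rop_add_const hP hθ]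
  ring

lemma satBellman_add_const_iff (hP : ∀ y, 0 < P y) (hθ : θ ≠ 0) :
    SatBellman P γ θ Bset hB0 q lam ψ Γ δ π (z + (1 - γ) * c)
        (fun y Bb b => WR y Bb b + c) (fun y => WA y + c) ↔
      SatBellman P γ θ Bset hB0 q lam ψ Γ δ π z WR WA := by
  have : Nonempty ↥Bset := ⟨⟨0, hB0⟩⟩
  have hsup (f : ↥Bset → ℝ) : ⨆ b', (f b' + c) = (⨆ b', f b') + c :=
    (ciSup_add (Set.finite_range f).bddAbove c).symm
  simp only [satBellman_iff, lenderObjective_add_const (hP _) hθ,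
    exclusionValue_add_const (hP _) hθ, hsup, add_left_inj]

end LenderProblem

theorem stmt16_general {Y : Type} [Fintype Y] (P : Y → Y → ℝ) (hP : ∀ y, 0 < P y)
    (γ θ : ℝ) (hθ : θ ≠ 0) (Bset : Finset ℝ) (hB0 : (0 : ℝ) ∈ Bset)
    (q : Y → ↥Bset → ℝ) (lam ψ : ℝ) (Γ : Y → ↥Bset → ↥Bset) (δ : Y → ↥Bset → ℝ) (π z : ℝ)
    (WR : Y → ↥Bset → ↥Bset → ℝ) (WA : Y → ℝ) (c : ℝ) :
    (SatBellman P γ θ Bset hB0 q lam ψ Γ δ π (z + (1 - γ) * c)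
        (fun y Bb b => WR y Bb b + c) (fun y => WA y + c) ↔
      SatBellman P γ θ Bset hB0 q lam ψ Γ δ π z WR WA) ∧
    (∀ (y : Y) (Bb b b₀ : ↥Bset),
      (∀ b', lenderObjective P γ θ q lam ψ Γ δ z WR WA y Bb b b' ≤
        lenderObjective P γ θ q lam ψ Γ δ z WR WA y Bb b b₀) ↔
      ∀ b', lenderObjective P γ θ q lam ψ Γ δ (z + (1 - γ) * c)
          (fun y Bb b => WR y Bb b + c) (fun y => WA y + c) y Bb b b' ≤
        lenderObjective P γ θ q lam ψ Γ δ (z + (1 - γ) * c)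
          (fun y Bb b => WR y Bb b + c) (fun y => WA y + c) y Bb b b₀) ∧
    (∀ (y y' : Y) (Bb b' : ↥Bset),
      gibbsWeight (P y) θ (fun y' => Wmix δ (fun y Bb b => WR y Bb b + c) (fun y => WA y + c)
          y' (Γ y Bb) b') y' =
        gibbsWeight (P y) θ (fun y' => Wmix δ WR WA y' (Γ y Bb) b') y') := by
  refine ⟨satBellman_add_const_iff hP hθ, fun y Bb b b₀ => ?_, fun y y' Bb b' => ?_⟩
  · simp only [lenderObjective_add_const (hP y) hθ, add_le_add_iff_right]
  · simp only [wmix_add_const, gibbsWeight_add_const]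

/-- **Irrelevance of the level of the lenders' endowment.**
If bounded `W_R, W_A` solve the lender's Bellman system with constant endowment `z̄`, then
for every `Δ ∈ ℝ` the shifted functions `W_R + Δ/(1−γ)`, `W_A + Δ/(1−γ)` solve the same
system with endowment `z̄ + Δ`; moreover at every state the set of maximizing portfolios
`b'` is unchanged, and the worst-case Gibbs probability weights are unchanged. -/
theorem stmt16 {Y : Type} [Fintype Y] [Nonempty Y]
    (P : Y → Y → ℝ) (hP0 : ∀ y y', 0 ≤ P y y') (hP1 : ∀ y, ∑ y', P y y' = 1)
    (γ θ : ℝ) (hγ0 : 0 < γ) (hγ1 : γ < 1) (hθ : 0 < θ)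
    (Bset : Finset ℝ) (hB0 : (0 : ℝ) ∈ Bset)
    (q : Y → ↥Bset → ℝ) (Cq : ℝ) (hq : ∀ y Bb, |q y Bb| ≤ Cq)
    (lam ψ : ℝ) (hlam0 : 0 < lam) (hlam1 : lam ≤ 1) (hψ : 0 ≤ ψ)
    (Γ : Y → ↥Bset → ↥Bset) (δ : Y → ↥Bset → ℝ) (hδ : ∀ y Bb, δ y Bb = 0 ∨ δ y Bb = 1)
    (π : ℝ) (hπ0 : 0 ≤ π) (hπ1 : π ≤ 1) (zbar : ℝ)
    (WR : Y → ↥Bset → ↥Bset → ℝ) (WA : Y → ℝ)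
    (CW : ℝ) (hWRbd : ∀ y Bb b, |WR y Bb b| ≤ CW) (hWAbd : ∀ y, |WA y| ≤ CW)
    (hsat : SatBellman P γ θ Bset hB0 q lam ψ Γ δ π zbar WR WA) :
    ∀ Δ : ℝ,
      SatBellman P γ θ Bset hB0 q lam ψ Γ δ π (zbar + Δ)
        (fun y Bb b => WR y Bb b + Δ / (1 - γ)) (fun y => WA y + Δ / (1 - γ)) ∧
      (∀ (y : Y) (Bb b b₀ : ↥Bset),
        (∀ b' : ↥Bset,
          zbar + Gpay (q y (Γ y Bb)) lam ψ (b : ℝ) (b' : ℝ) +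
              γ * Rop P θ (fun y' => Wmix δ WR WA y' (Γ y Bb) b') y
            ≤ zbar + Gpay (q y (Γ y Bb)) lam ψ (b : ℝ) (b₀ : ℝ) +
              γ * Rop P θ (fun y' => Wmix δ WR WA y' (Γ y Bb) b₀) y) ↔
        (∀ b' : ↥Bset,
          (zbar + Δ) + Gpay (q y (Γ y Bb)) lam ψ (b : ℝ) (b' : ℝ) +
              γ * Rop P θ (fun y' =>
                Wmix δ (fun y₁ Bb₁ b₁ => WR y₁ Bb₁ b₁ + Δ / (1 - γ))
                  (fun y₁ => WA y₁ + Δ / (1 - γ)) y' (Γ y Bb) b') y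
            ≤ (zbar + Δ) + Gpay (q y (Γ y Bb)) lam ψ (b : ℝ) (b₀ : ℝ) +
              γ * Rop P θ (fun y' =>
                Wmix δ (fun y₁ Bb₁ b₁ => WR y₁ Bb₁ b₁ + Δ / (1 - γ))
                  (fun y₁ => WA y₁ + Δ / (1 - γ)) y' (Γ y Bb) b₀) y)) ∧
      (∀ (y y' : Y) (Bb b' : ↥Bset),
        Real.exp (-(Wmix δ (fun y₁ Bb₁ b₁ => WR y₁ Bb₁ b₁ + Δ / (1 - γ))
              (fun y₁ => WA y₁ + Δ / (1 - γ)) y' (Γ y Bb) b') / θ) /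
            ∑ y'', P y y'' *
              Real.exp (-(Wmix δ (fun y₁ Bb₁ b₁ => WR y₁ Bb₁ b₁ + Δ / (1 - γ))
                (fun y₁ => WA y₁ + Δ / (1 - γ)) y'' (Γ y Bb) b') / θ)
          = Real.exp (-(Wmix δ WR WA y' (Γ y Bb) b') / θ) /
            ∑ y'', P y y'' * Real.exp (-(Wmix δ WR WA y'' (Γ y Bb) b') / θ)) := by
  intro Δ
  have h := stmt16_general P (fun y => pos_of_nonneg_of_sum_eq_one (hP0 y) (hP1 y)) γ θ hθ.ne'
    Bset hB0 q lam ψ Γ δ π zbar WR WA (Δ / (1 - γ))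
  rw [mul_div_cancel₀ Δ (sub_pos.2 hγ1).ne'] at h
  exact ⟨h.1.2 hsat, h.2⟩
end
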